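/- arXiv:1204.6650 — 3 statements merged into one kernel-verified Lean document; each statement's English description precedes it below -/
import Mathlib

section
/- If X has mean zero, variance one, and density p with finite Fisher information, then the total variation of p − φ satisfies ∫ |p'(x) − φ'(x)| dx ≤ 4 √(I(X‖Z)), where φ is the standard normal density and I(X‖Z) = ∫_{p>0} (p'/p + x)² p dx is the relative Fisher information. -/
open MeasureTheory Real

/-!
The difference `q = p - φ` has integral zero, and `q' + x q = p' + x p` because `φ' = -x φ`.
Since `(q e^{x²/2})' = (q' + x q) e^{x²/2}`, integrating from `0` and applying Tonelli bounds
`∫ |x q|` by `2 ∫ |q' + x q|`: one copy comes from `∫_t^∞ x e^{-x²/2} dx = e^{-t²/2}`, and the other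
from the value `q 0`, which `∫ q = 0` and `∫_t^∞ e^{-x²/2} dx ≤ √(2π)/2 · e^{-t²/2}` control. Hence
`∫ |q'| ≤ 3 ∫ |p' + x p|`, and the last integral is the mean of the absolute value of `p'/p + x`
under `p`, so it is at most `√(I(X‖Z))`.
-/

open Set Filter Topology
open scoped ENNReal Interval

/-- `u` is locally absolutely continuous with almost everywhere derivative `u'`, encoded as `u'`
being locally integrable and `u` being one of its primitives. -/
structure HasLocIntegrableDeriv (u u' : ℝ → ℝ) : Prop where
  locallyIntegrable : LocallyIntegrable u'
  sub_eq_integral : ∀ a b, u b - u a = ∫ x in a..b, u' x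

namespace HasLocIntegrableDeriv

variable {u u' v v' : ℝ → ℝ}

lemma of_hasDerivAt (h : ∀ x, HasDerivAt u (u' x) x) (hu' : Continuous u') :
    HasLocIntegrableDeriv u u' where
  locallyIntegrable := hu'.locallyIntegrable
  sub_eq_integral a b :=
    (intervalIntegral.integral_eq_sub_of_hasDerivAt (fun x _ => h x)
      (hu'.intervalIntegrable a b)).symm

lemma intervalIntegrable (hu : HasLocIntegrableDeriv u u') (a b : ℝ) :
    IntervalIntegrable u' volume a b :=
  (hu.locallyIntegrable.integrableOn_isCompact isCompact_uIcc).intervalIntegrable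

lemma eq_const_add_integral (hu : HasLocIntegrableDeriv u u') :
    u = fun x => u 0 + ∫ t in (0 : ℝ)..x, u' t := by
  funext x
  rw [← hu.sub_eq_integral, add_sub_cancel]

lemma continuous (hu : HasLocIntegrableDeriv u u') : Continuous u := by
  rw [hu.eq_const_add_integral]
  exact continuous_const.add (intervalIntegral.continuous_primitive hu.intervalIntegrable 0)

lemma ae_hasDerivAt (hu : HasLocIntegrableDeriv u u') : ∀ᵐ x, HasDerivAt u (u' x) x := by
  filter_upwards [LocallyIntegrable.ae_hasDerivAt_integral hu.locallyIntegrable] with x hx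
  rw [hu.eq_const_add_integral]
  exact (hx 0).const_add _

lemma absolutelyContinuousOnInterval (hu : HasLocIntegrableDeriv u u') (a b : ℝ) :
    AbsolutelyContinuousOnInterval u a b := by
  have hconst : AbsolutelyContinuousOnInterval (fun _ => u a) a b :=
    contDiff_const.contDiffOn.absolutelyContinuousOnInterval
  have hprim := (hu.intervalIntegrable a b).absolutelyContinuousOnInterval_intervalIntegral
    left_mem_uIcc
  have hsum : u = (fun _ => u a) + fun x => ∫ t in a..x, u' t := by
    funext x
    simp [← hu.sub_eq_integral]
  rw [hsum]
  exact hconst.add hprim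

lemma sub (hu : HasLocIntegrableDeriv u u') (hv : HasLocIntegrableDeriv v v') :
    HasLocIntegrableDeriv (u - v) (u' - v') where
  locallyIntegrable := hu.locallyIntegrable.sub hv.locallyIntegrable
  sub_eq_integral a b := by
    simp only [Pi.sub_apply]
    rw [intervalIntegral.integral_sub (hu.intervalIntegrable a b) (hv.intervalIntegrable a b),
      ← hu.sub_eq_integral, ← hv.sub_eq_integral]
    ring

lemma mul_sub_mul_eq_integral (hu : HasLocIntegrableDeriv u u') (hv : HasLocIntegrableDeriv v v')
    (a b : ℝ) : u b * v b - u a * v a = ∫ x in a..b, (u' x * v x + u x * v' x) := by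
  have hac := (hu.absolutelyContinuousOnInterval a b).mul (hv.absolutelyContinuousOnInterval a b)
  refine hac.integral_deriv_eq_sub.symm.trans (intervalIntegral.integral_congr_ae ?_)
  filter_upwards [hu.ae_hasDerivAt, hv.ae_hasDerivAt] with x hux hvx _
  exact (hux.mul hvx).deriv

lemma ae_eq_zero_of_apply_eq_zero (hu : HasLocIntegrableDeriv u u') (hnn : ∀ x, 0 ≤ u x) :
    ∀ᵐ x, u x = 0 → u' x = 0 := by
  filter_upwards [hu.ae_hasDerivAt] with x hx hux
  have hmin : IsLocalMin u x := Eventually.of_forall fun y => hux.trans_le (hnn y)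
  exact hmin.hasDerivAt_eq_zero hx

end HasLocIntegrableDeriv

section WeightedHardy

lemma lintegral_mul_enorm_intervalIntegral_le {E : Type*} [NormedAddCommGroup E] [NormedSpace ℝ E]
    {μ ν : Measure ℝ} [SFinite μ] [SFinite ν] {w : ℝ → ℝ≥0∞} {h : ℝ → E}
    (hw : AEMeasurable w μ) (hh : AEStronglyMeasurable h ν) (a : ℝ) :
    ∫⁻ x, w x * ‖∫ t in a..x, h t ∂ν‖ₑ ∂μ
      ≤ ∫⁻ t, (∫⁻ x in {x | t ∈ Ι a x}, w x ∂μ) * ‖h t‖ₑ ∂ν := by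
  set T : Set (ℝ × ℝ) := {z | z.2 ∈ Ι a z.1} with hT_def
  have hT : MeasurableSet T := by
    simp only [hT_def, mem_uIoc]
    measurability
  have hmeas : AEMeasurable (fun z => T.indicator (fun z => w z.1 * ‖h z.2‖ₑ) z) (μ.prod ν) :=
    (hw.comp_fst.mul hh.enorm.comp_snd).indicator hT
  calc ∫⁻ x, w x * ‖∫ t in a..x, h t ∂ν‖ₑ ∂μ
      ≤ ∫⁻ x, ∫⁻ t, T.indicator (fun z => w z.1 * ‖h z.2‖ₑ) (x, t) ∂ν ∂μ := by
        refine lintegral_mono fun x => ?_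
        have hsec : (fun t => T.indicator (fun z => w z.1 * ‖h z.2‖ₑ) (x, t))
            = (Ι a x).indicator fun t => w x * ‖h t‖ₑ := rfl
        rw [hsec, lintegral_indicator measurableSet_uIoc,
          lintegral_const_mul'' _ hh.enorm.restrict, ← ofReal_norm,
          intervalIntegral.norm_integral_eq_norm_integral_uIoc, ofReal_norm]
        gcongr
        exact enorm_integral_le_lintegral_enorm _
    _ = ∫⁻ t, ∫⁻ x, T.indicator (fun z => w z.1 * ‖h z.2‖ₑ) (x, t) ∂μ ∂ν :=
        lintegral_lintegral_swap hmeas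
    _ = ∫⁻ t, (∫⁻ x in {x | t ∈ Ι a x}, w x ∂μ) * ‖h t‖ₑ ∂ν := by
        refine lintegral_congr fun t => ?_
        have hsec : (fun x => T.indicator (fun z => w z.1 * ‖h z.2‖ₑ) (x, t))
            = {x | t ∈ Ι a x}.indicator fun x => w x * ‖h t‖ₑ := rfl
        have hsec_meas : MeasurableSet {x | t ∈ Ι a x} := measurable_prodMk_right hT
        rw [hsec, lintegral_indicator hsec_meas, lintegral_mul_const' _ _ enorm_ne_top]

variable {w : ℝ → ℝ≥0∞}

lemma setLIntegral_mem_uIoc_zero_le_of_even (hw : w.Even) (t : ℝ) :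
    ∫⁻ x in {x | t ∈ Ι 0 x}, w x ≤ ∫⁻ x in Ici |t|, w x := by
  rcases lt_or_ge 0 t with ht | ht
  · refine lintegral_mono_set fun x hx => ?_
    rw [mem_Ici, abs_of_pos ht]
    rcases mem_uIoc.1 hx with h | h
    exacts [h.2, absurd h.2 ht.not_ge]
  · have hsub : {x | t ∈ Ι 0 x} ⊆ Neg.neg ⁻¹' Ici |t| := fun x hx => by
      rw [mem_preimage, mem_Ici, abs_of_nonpos ht, neg_le_neg_iff]
      rcases mem_uIoc.1 hx with h | h
      exacts [absurd h.1 ht.not_gt, h.1.le]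
    calc ∫⁻ x in {x | t ∈ Ι 0 x}, w x
        ≤ ∫⁻ x in Neg.neg ⁻¹' Ici |t|, w (-x) := by
          simp only [hw _]
          exact lintegral_mono_set hsub
      _ = ∫⁻ x in Ici |t|, w x :=
          (Measure.measurePreserving_neg volume).setLIntegral_comp_preimage_emb
            (Homeomorph.neg ℝ).measurableEmbedding w _

lemma lintegral_even_mul_enorm_integral_mul_exp_le {g : ℝ → ℝ} {K : ℝ≥0∞} (hw : AEMeasurable w)
    (hwe : w.Even) (hwK : ∀ t, 0 ≤ t → ∫⁻ x in Ici t, w x ≤ K * .ofReal (exp (-t ^ 2 / 2)))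
    (hg : AEStronglyMeasurable g) :
    ∫⁻ x, w x * ‖∫ t in (0 : ℝ)..x, g t * exp (t ^ 2 / 2)‖ₑ ≤ K * ∫⁻ t, ‖g t‖ₑ := by
  have hh : AEStronglyMeasurable fun t => g t * exp (t ^ 2 / 2) :=
    hg.mul (by fun_prop : Continuous fun t : ℝ => exp (t ^ 2 / 2)).aestronglyMeasurable
  refine (lintegral_mul_enorm_intervalIntegral_le hw hh 0).trans ?_
  rw [← lintegral_const_mul'' _ hg.enorm]
  refine lintegral_mono fun t => ?_
  have hexp : ENNReal.ofReal (exp (-t ^ 2 / 2)) * ‖exp (t ^ 2 / 2)‖ₑ = 1 := by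
    rw [Real.enorm_of_nonneg (exp_pos _).le, ← ENNReal.ofReal_mul (exp_pos _).le, ← exp_add,
      neg_div, neg_add_cancel, exp_zero, ENNReal.ofReal_one]
  calc (∫⁻ x in {x | t ∈ Ι 0 x}, w x) * ‖g t * exp (t ^ 2 / 2)‖ₑ
      ≤ K * .ofReal (exp (-|t| ^ 2 / 2)) * ‖g t * exp (t ^ 2 / 2)‖ₑ := by
        gcongr
        exact (setLIntegral_mem_uIoc_zero_le_of_even hwe t).trans (hwK _ (abs_nonneg t))
    _ = K * ‖g t‖ₑ * (.ofReal (exp (-t ^ 2 / 2)) * ‖exp (t ^ 2 / 2)‖ₑ) := by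
        rw [sq_abs, enorm_mul]
        ring
    _ = K * ‖g t‖ₑ := by rw [hexp, mul_one]

end WeightedHardy

section Gaussian

lemma hasDerivAt_exp_sq_div_two (x : ℝ) :
    HasDerivAt (fun x => exp (x ^ 2 / 2)) (exp (x ^ 2 / 2) * x) x := by
  simpa using ((hasDerivAt_pow 2 x).div_const 2).exp

lemma hasDerivAt_exp_neg_sq_div_two (x : ℝ) :
    HasDerivAt (fun x => exp (-x ^ 2 / 2)) (-(x * exp (-x ^ 2 / 2))) x := by
  convert! ((hasDerivAt_pow 2 x).fun_neg.div_const 2).exp using 1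
  push_cast
  ring

lemma tendsto_exp_neg_sq_div_two_atTop :
    Tendsto (fun x : ℝ => exp (-x ^ 2 / 2)) atTop (𝓝 0) :=
  tendsto_exp_atBot.comp <|
    (tendsto_neg_atTop_atBot.comp (tendsto_pow_atTop two_ne_zero)).atBot_div_const two_pos

lemma integrable_exp_neg_sq_div_two : Integrable fun x : ℝ => exp (-x ^ 2 / 2) := by
  convert! integrable_exp_neg_mul_sq one_half_pos using 3
  ring

lemma integral_exp_neg_sq_div_two : ∫ x : ℝ, exp (-x ^ 2 / 2) = √(2 * π) := by
  convert! integral_gaussian (1 / 2) using 2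
  · ext; ring_nf
  · ring_nf

lemma integral_Ioi_exp_neg_sq_div_two :
    ∫ x in Ioi (0 : ℝ), exp (-x ^ 2 / 2) = √(2 * π) / 2 := by
  convert! integral_gaussian_Ioi (1 / 2) using 2
  · ext; ring_nf
  · ring_nf

lemma setLIntegral_Ici_exp_neg_sq_div_two_le {t : ℝ} (ht : 0 ≤ t) :
    ∫⁻ x in Ici t, ‖exp (-x ^ 2 / 2)‖ₑ
      ≤ .ofReal (√(2 * π) / 2) * .ofReal (exp (-t ^ 2 / 2)) := by
  have hshift : ∀ y ∈ Ici (0 : ℝ),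
      ‖exp (-(t + y) ^ 2 / 2)‖ₑ ≤ ‖exp (-y ^ 2 / 2)‖ₑ * .ofReal (exp (-t ^ 2 / 2)) := by
    intro y hy
    rw [Real.enorm_of_nonneg (exp_pos _).le, Real.enorm_of_nonneg (exp_pos _).le,
      ← ENNReal.ofReal_mul (exp_pos _).le, ← exp_add]
    gcongr
    nlinarith [mul_nonneg ht (mem_Ici.1 hy)]
  calc ∫⁻ x in Ici t, ‖exp (-x ^ 2 / 2)‖ₑ
      = ∫⁻ y in Ici 0, ‖exp (-(t + y) ^ 2 / 2)‖ₑ := by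
        rw [← (measurePreserving_add_left volume t).setLIntegral_comp_preimage_emb
          (measurableEmbedding_addLeft t), preimage_const_add_Ici, sub_self]
    _ ≤ ∫⁻ y in Ici 0, ‖exp (-y ^ 2 / 2)‖ₑ * .ofReal (exp (-t ^ 2 / 2)) :=
        setLIntegral_mono' measurableSet_Ici hshift
    _ = .ofReal (√(2 * π) / 2) * .ofReal (exp (-t ^ 2 / 2)) := by
        rw [lintegral_mul_const' _ _ ENNReal.ofReal_ne_top, setLIntegral_congr Ioi_ae_eq_Ici.symm,
          ← ofReal_integral_norm_eq_lintegral_enorm integrable_exp_neg_sq_div_two.integrableOn]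
        simp only [norm_eq_abs, abs_exp, integral_Ioi_exp_neg_sq_div_two]

lemma setLIntegral_Ici_mul_exp_neg_sq_div_two {t : ℝ} (ht : 0 ≤ t) :
    ∫⁻ x in Ici t, ‖x * exp (-x ^ 2 / 2)‖ₑ = .ofReal (exp (-t ^ 2 / 2)) := by
  have hderiv : ∀ x ∈ Ici t, HasDerivAt (fun x => -exp (-x ^ 2 / 2)) (x * exp (-x ^ 2 / 2)) x :=
    fun x _ => by simpa using (hasDerivAt_exp_neg_sq_div_two x).fun_neg
  have hnn : ∀ x ∈ Ioi t, 0 ≤ x * exp (-x ^ 2 / 2) :=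
    fun x hx => mul_nonneg (ht.trans (mem_Ioi.1 hx).le) (exp_pos _).le
  have hlim := tendsto_exp_neg_sq_div_two_atTop.neg
  rw [setLIntegral_congr Ioi_ae_eq_Ici.symm, ← ofReal_integral_norm_eq_lintegral_enorm
      (integrableOn_Ioi_deriv_of_nonneg' hderiv hnn hlim),
    setIntegral_congr_fun measurableSet_Ioi fun x hx => norm_of_nonneg (hnn x hx),
    integral_Ioi_of_hasDerivAt_of_nonneg' hderiv hnn hlim]
  simp

lemma lintegral_mul_exp_neg_sq_div_two : ∫⁻ x : ℝ, ‖x * exp (-x ^ 2 / 2)‖ₑ = 2 := by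
  have hhalf := setLIntegral_Ici_mul_exp_neg_sq_div_two le_rfl
  have hneg : ∫⁻ x in Iic 0, ‖x * exp (-x ^ 2 / 2)‖ₑ = ∫⁻ x in Ici 0, ‖x * exp (-x ^ 2 / 2)‖ₑ := by
    rw [← (Measure.measurePreserving_neg volume).setLIntegral_comp_preimage_emb
      (Homeomorph.neg ℝ).measurableEmbedding]
    simp
  rw [← lintegral_add_compl _ measurableSet_Ici, compl_Ici, setLIntegral_congr Iio_ae_eq_Iic,
    hneg, hhalf]
  norm_num

end Gaussian

section GaussianPoincare

variable {q q' : ℝ → ℝ}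

lemma HasLocIntegrableDeriv.eq_exp_mul_add_integral (hq : HasLocIntegrableDeriv q q') (x : ℝ) :
    q x = exp (-x ^ 2 / 2) * (q 0 + ∫ t in (0 : ℝ)..x, (q' t + t * q t) * exp (t ^ 2 / 2)) := by
  have hexp := HasLocIntegrableDeriv.of_hasDerivAt hasDerivAt_exp_sq_div_two (by fun_prop)
  have hprod := hq.mul_sub_mul_eq_integral hexp 0 x
  have hinv : exp (-x ^ 2 / 2) * exp (x ^ 2 / 2) = 1 := by
    rw [← exp_add, neg_div, neg_add_cancel, exp_zero]
  have hintegrand : (fun t => (q' t + t * q t) * exp (t ^ 2 / 2))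
      = fun t => q' t * exp (t ^ 2 / 2) + q t * (exp (t ^ 2 / 2) * t) := by
    funext t
    ring
  rw [hintegrand, ← hprod]
  simp only [ne_eq, OfNat.ofNat_ne_zero, not_false_eq_true, zero_pow, zero_div, exp_zero, mul_one]
  linear_combination -q x * hinv

lemma HasLocIntegrableDeriv.aestronglyMeasurable_add_mul (hq : HasLocIntegrableDeriv q q') :
    AEStronglyMeasurable fun x => q' x + x * q x :=
  hq.locallyIntegrable.aestronglyMeasurable.add
    (continuous_id.mul hq.continuous).aestronglyMeasurable

lemma HasLocIntegrableDeriv.two_mul_enorm_apply_zero_le (hq : HasLocIntegrableDeriv q q')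
    (hint : Integrable q) (h0 : ∫ x, q x = 0) :
    2 * ‖q 0‖ₑ ≤ ∫⁻ x, ‖q' x + x * q x‖ₑ := by
  set H : ℝ → ℝ := fun x => ∫ t in (0 : ℝ)..x, (q' t + t * q t) * exp (t ^ 2 / 2)
  have hsplit : (fun x => exp (-x ^ 2 / 2) * H x) = fun x => q x - exp (-x ^ 2 / 2) * q 0 := by
    funext x
    rw [hq.eq_exp_mul_add_integral x]
    ring
  have hmean : ∫ x, exp (-x ^ 2 / 2) * H x = -(√(2 * π) * q 0) := by
    rw [hsplit, integral_sub hint (integrable_exp_neg_sq_div_two.mul_const _), integral_mul_const,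
      h0, integral_exp_neg_sq_div_two, zero_sub]
  have hweight : √(2 * π) = √(2 * π) / 2 * 2 := by ring
  have hbound : .ofReal (√(2 * π) / 2) * (2 * ‖q 0‖ₑ)
      ≤ .ofReal (√(2 * π) / 2) * ∫⁻ x, ‖q' x + x * q x‖ₑ := by
    calc .ofReal (√(2 * π) / 2) * (2 * ‖q 0‖ₑ)
        = ‖∫ x, exp (-x ^ 2 / 2) * H x‖ₑ := by
          rw [hmean, enorm_neg, enorm_mul, Real.enorm_of_nonneg (sqrt_nonneg _)]
          nth_rw 2 [hweight]
          rw [ENNReal.ofReal_mul (by positivity), ENNReal.ofReal_ofNat, mul_assoc]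
      _ ≤ ∫⁻ x, ‖exp (-x ^ 2 / 2)‖ₑ * ‖H x‖ₑ := by
          simpa only [enorm_mul] using
            enorm_integral_le_lintegral_enorm fun x => exp (-x ^ 2 / 2) * H x
      _ ≤ _ := lintegral_even_mul_enorm_integral_mul_exp_le (by fun_prop) (fun x => by simp)
          (fun _ => setLIntegral_Ici_exp_neg_sq_div_two_le) hq.aestronglyMeasurable_add_mul
  exact (ENNReal.mul_le_mul_iff_right (by positivity) ENNReal.ofReal_ne_top).1 hbound

lemma HasLocIntegrableDeriv.lintegral_enorm_mul_le (hq : HasLocIntegrableDeriv q q')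
    (hint : Integrable q) (h0 : ∫ x, q x = 0) :
    ∫⁻ x, ‖x * q x‖ₑ ≤ 2 * ∫⁻ x, ‖q' x + x * q x‖ₑ := by
  set H : ℝ → ℝ := fun x => ∫ t in (0 : ℝ)..x, (q' t + t * q t) * exp (t ^ 2 / 2)
  have hw : Measurable fun x : ℝ => ‖x * exp (-x ^ 2 / 2)‖ₑ := by fun_prop
  have hH : ∫⁻ x, ‖x * exp (-x ^ 2 / 2)‖ₑ * ‖H x‖ₑ ≤ 1 * ∫⁻ x, ‖q' x + x * q x‖ₑ :=
    lintegral_even_mul_enorm_integral_mul_exp_le hw.aemeasurable (fun x => by simp)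
      (fun _ ht => by rw [setLIntegral_Ici_mul_exp_neg_sq_div_two ht, one_mul])
      hq.aestronglyMeasurable_add_mul
  calc ∫⁻ x, ‖x * q x‖ₑ
      ≤ ∫⁻ x, (‖x * exp (-x ^ 2 / 2)‖ₑ * ‖q 0‖ₑ + ‖x * exp (-x ^ 2 / 2)‖ₑ * ‖H x‖ₑ) := by
        refine lintegral_mono fun x => ?_
        rw [hq.eq_exp_mul_add_integral x, ← mul_assoc, enorm_mul, ← mul_add]
        gcongr
        exact enorm_add_le _ _
    _ = 2 * ‖q 0‖ₑ + ∫⁻ x, ‖x * exp (-x ^ 2 / 2)‖ₑ * ‖H x‖ₑ := by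
        rw [lintegral_add_left (hw.mul_const _), lintegral_mul_const _ hw,
          lintegral_mul_exp_neg_sq_div_two]
    _ ≤ (∫⁻ x, ‖q' x + x * q x‖ₑ) + 1 * ∫⁻ x, ‖q' x + x * q x‖ₑ := by
        gcongr
        exact hq.two_mul_enorm_apply_zero_le hint h0
    _ = 2 * ∫⁻ x, ‖q' x + x * q x‖ₑ := by ring

theorem HasLocIntegrableDeriv.lintegral_enorm_deriv_le (hq : HasLocIntegrableDeriv q q')
    (hint : Integrable q) (h0 : ∫ x, q x = 0) :
    ∫⁻ x, ‖q' x‖ₑ ≤ 3 * ∫⁻ x, ‖q' x + x * q x‖ₑ :=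
  calc ∫⁻ x, ‖q' x‖ₑ
      ≤ ∫⁻ x, (‖q' x + x * q x‖ₑ + ‖x * q x‖ₑ) := by
        refine lintegral_mono fun x => ?_
        simpa using enorm_sub_le (a := q' x + x * q x) (b := x * q x)
    _ = (∫⁻ x, ‖q' x + x * q x‖ₑ) + ∫⁻ x, ‖x * q x‖ₑ :=
        lintegral_add_left' hq.aestronglyMeasurable_add_mul.enorm _
    _ ≤ (∫⁻ x, ‖q' x + x * q x‖ₑ) + 2 * ∫⁻ x, ‖q' x + x * q x‖ₑ := by
        gcongr
        exact hq.lintegral_enorm_mul_le hint h0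
    _ = 3 * ∫⁻ x, ‖q' x + x * q x‖ₑ := by ring

theorem HasLocIntegrableDeriv.integral_abs_deriv_add_mul_gaussian_le {p p' : ℝ → ℝ}
    (hp : HasLocIntegrableDeriv p p') (h1 : ∫ x, p x = 1)
    (hflux : Integrable fun x => p' x + x * p x) :
    ∫ x, |p' x + x * (exp (-x ^ 2 / 2) / √(2 * π))| ≤ 3 * ∫ x, |p' x + x * p x| := by
  set φ : ℝ → ℝ := fun x => exp (-x ^ 2 / 2) / √(2 * π) with hφ_def
  have hφ : HasLocIntegrableDeriv φ fun x => -(x * φ x) :=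
    .of_hasDerivAt (fun x => ((hasDerivAt_exp_neg_sq_div_two x).div_const _).congr_deriv
      (by simp only [hφ_def]; ring)) (by fun_prop)
  have hφ_int : Integrable φ := integrable_exp_neg_sq_div_two.div_const _
  have hφ_one : ∫ x, φ x = 1 := by
    rw [integral_div, integral_exp_neg_sq_div_two, div_self (by positivity)]
  have hp_int : Integrable p := integrable_of_integral_eq_one h1
  have hq_zero : ∫ x, (p - φ) x = 0 := by
    simp only [Pi.sub_apply]
    rw [integral_sub hp_int hφ_int, h1, hφ_one, sub_self]
  have hflux_eq : ∀ x, p' x + x * φ x + x * (p x - φ x) = p' x + x * p x := fun x => by ring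
  have hle := (hp.sub hφ).lintegral_enorm_deriv_le (hp_int.sub hφ_int) hq_zero
  simp only [Pi.sub_apply, sub_neg_eq_add, hflux_eq] at hle
  have hmeas : AEStronglyMeasurable fun x => p' x + x * φ x := by
    simpa [Pi.sub_def] using (hp.sub hφ).locallyIntegrable.aestronglyMeasurable
  simp only [← norm_eq_abs]
  rw [integral_norm_eq_lintegral_enorm hmeas,
    integral_norm_eq_lintegral_enorm hflux.aestronglyMeasurable]
  simpa using ENNReal.toReal_mono (ENNReal.mul_ne_top (by simp) hflux.hasFiniteIntegral.ne) hle

end GaussianPoincare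

section FisherInformation

variable {α : Type*} [MeasurableSpace α] {μ : Measure α} {s p : α → ℝ}

lemma integrable_mul_of_integrable_sq_mul (hnn : 0 ≤ᵐ[μ] p) (hp : Integrable p μ)
    (hmeas : AEStronglyMeasurable (fun x => s x * p x) μ)
    (hsq : Integrable (fun x => s x ^ 2 * p x) μ) : Integrable (fun x => s x * p x) μ := by
  refine (hsq.add hp).mono' hmeas ?_
  filter_upwards [hnn] with x hx
  rw [norm_mul, norm_eq_abs, norm_of_nonneg hx, Pi.add_apply, ← sq_abs]
  nlinarith [mul_nonneg (sq_nonneg (|s x| - 1)) hx, mul_nonneg (abs_nonneg (s x)) hx]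

lemma integral_abs_mul_le_sqrt_integral_sq_mul (hnn : 0 ≤ᵐ[μ] p) (h1 : ∫ x, p x ∂μ = 1)
    (hsp : Integrable (fun x => s x * p x) μ) (hsq : Integrable (fun x => s x ^ 2 * p x) μ) :
    ∫ x, |s x * p x| ∂μ ≤ √(∫ x, s x ^ 2 * p x ∂μ) := by
  set m := ∫ x, |s x * p x| ∂μ
  have hp : Integrable p μ := integrable_of_integral_eq_one h1
  have hvar : ∫ x, 2 * m * |s x * p x| ∂μ ≤ ∫ x, (s x ^ 2 * p x + m ^ 2 * p x) ∂μ := by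
    refine integral_mono_ae (hsp.abs.const_mul _) (hsq.add (hp.const_mul _)) ?_
    filter_upwards [hnn] with x hx
    rw [abs_mul, abs_of_nonneg hx, ← sq_abs (s x)]
    nlinarith [mul_nonneg (sq_nonneg (|s x| - m)) hx]
  rw [integral_const_mul, integral_add hsq (hp.const_mul _), integral_const_mul, h1] at hvar
  exact le_sqrt_of_sq_le (by linarith)

lemma aemeasurable_of_sq_of_add_sq {f c : α → ℝ} (hc : AEMeasurable c μ) (hc0 : ∀ᵐ x ∂μ, c x ≠ 0)
    (hf : AEMeasurable (fun x => f x ^ 2) μ) (hfc : AEMeasurable (fun x => (f x + c x) ^ 2) μ) :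
    AEMeasurable f μ := by
  refine (((hfc.sub hf).sub (hc.pow_const 2)).div (hc.const_mul 2)).congr ?_
  filter_upwards [hc0] with x hx
  simp only [Pi.div_apply, Pi.sub_apply]
  field_simp
  ring

-- The second integrand expands into the first, `x² p` and the cross term `2 x p'`.
lemma aemeasurable_deriv_of_fisher_integrands {p p' : ℝ → ℝ} {ν : Measure ℝ} [NullSingletonClass ν]
    (hpos : ∀ᵐ x ∂ν, 0 < p x) (hp : AEMeasurable p ν)
    (hI : AEMeasurable (fun x => p' x ^ 2 / p x) ν)
    (hJ : AEMeasurable (fun x => (p' x / p x + x) ^ 2 * p x) ν) : AEMeasurable p' ν := by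
  have hsq : AEMeasurable (fun x => (p' x / p x) ^ 2) ν := by
    refine (hI.div hp).congr ?_
    filter_upwards [hpos] with x hx
    simp only [Pi.div_apply]
    field_simp
  have hadd_sq : AEMeasurable (fun x => (p' x / p x + x) ^ 2) ν := by
    refine (hJ.div hp).congr ?_
    filter_upwards [hpos] with x hx
    exact mul_div_cancel_right₀ _ hx.ne'
  have hne : ∀ᵐ x ∂ν, x ≠ 0 := by simp [ae_iff]
  refine ((aemeasurable_of_sq_of_add_sq aemeasurable_id hne hsq hadd_sq).mul hp).congr ?_
  filter_upwards [hpos] with x hx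
  exact div_mul_cancel₀ _ hx.ne'

lemma integrable_deriv_of_fisher_integrands {p p' : ℝ → ℝ} (hnn : ∀ x, 0 ≤ p x)
    (hint : Integrable p) (hconv : ∀ x, p x = 0 → p' x = 0)
    (hI : IntegrableOn (fun x => p' x ^ 2 / p x) {x | 0 < p x})
    (hJ : IntegrableOn (fun x => (p' x / p x + x) ^ 2 * p x) {x | 0 < p x}) : Integrable p' := by
  have hS : NullMeasurableSet {x | 0 < p x} :=
    nullMeasurableSet_lt aemeasurable_const hint.aemeasurable
  have hpos : ∀ᵐ x ∂volume.restrict {x | 0 < p x}, 0 < p x := ae_restrict_mem₀ hS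
  have hmeas : AEMeasurable p' (volume.restrict {x | 0 < p x}) :=
    aemeasurable_deriv_of_fisher_integrands hpos hint.aemeasurable.restrict hI.aemeasurable
      hJ.aemeasurable
  have hscore : (fun x => p' x / p x * p x) =ᵐ[volume.restrict {x | 0 < p x}] p' := by
    filter_upwards [hpos] with x hx using div_mul_cancel₀ _ hx.ne'
  have hsq : IntegrableOn (fun x => (p' x / p x) ^ 2 * p x) {x | 0 < p x} := by
    refine hI.congr ?_
    filter_upwards [hpos] with x hx
    field_simp
  have hp' : IntegrableOn p' {x | 0 < p x} :=
    (integrable_mul_of_integrable_sq_mul (ae_of_all _ hnn) hint.integrableOn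
      (hmeas.congr hscore.symm).aestronglyMeasurable hsq).congr hscore
  refine (integrableOn_iff_integrable_of_support_subset fun x hx => ?_).1 hp'
  exact (hnn x).lt_of_ne' fun h => hx (hconv x h)

end FisherInformation

theorem tv_dist_le_four_sqrt_relative_fisher_general
    {p p' : ℝ → ℝ} (hnn : ∀ x, 0 ≤ p x) (h1 : ∫ x, p x = 1) (hp : HasLocIntegrableDeriv p p')
    (hJ : IntegrableOn (fun x => (p' x / p x + x) ^ 2 * p x) {x | 0 < p x}) :
    ∫ x, |p' x + x * (exp (-x ^ 2 / 2) / √(2 * π))|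
      ≤ 3 * √(∫ x in {x | 0 < p x}, (p' x / p x + x) ^ 2 * p x) := by
  have hzero : ∀ x ∉ {x | 0 < p x}, (p' x / p x + x) ^ 2 * p x = 0 := fun x hx => by
    rw [le_antisymm (not_lt.1 hx) (hnn x), mul_zero]
  have hsq : Integrable fun x => (p' x / p x + x) ^ 2 * p x :=
    (integrableOn_iff_integrable_of_support_subset fun x => not_imp_comm.1 (hzero x)).1 hJ
  have hscore : (fun x => (p' x / p x + x) * p x) =ᵐ[volume] fun x => p' x + x * p x := by
    filter_upwards [hp.ae_eq_zero_of_apply_eq_zero hnn] with x hx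
    rw [add_mul, div_mul_cancel_of_imp hx]
  have hscore_int : Integrable fun x => (p' x / p x + x) * p x :=
    integrable_mul_of_integrable_sq_mul (ae_of_all _ hnn) (integrable_of_integral_eq_one h1)
      (hp.aestronglyMeasurable_add_mul.congr hscore.symm) hsq
  calc ∫ x, |p' x + x * (exp (-x ^ 2 / 2) / √(2 * π))|
      ≤ 3 * ∫ x, |p' x + x * p x| :=
        hp.integral_abs_deriv_add_mul_gaussian_le h1 (hscore_int.congr hscore)
    _ = 3 * ∫ x, |(p' x / p x + x) * p x| := by
        rw [integral_congr_ae (hscore.mono fun x hx => congrArg abs hx)]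
    _ ≤ 3 * √(∫ x, (p' x / p x + x) ^ 2 * p x) := by
        gcongr
        exact integral_abs_mul_le_sqrt_integral_sq_mul (ae_of_all _ hnn) h1 hscore_int hsq
    _ = _ := by rw [setIntegral_eq_integral_of_forall_compl_eq_zero hzero]

/-- If `X` has mean zero, variance one and density `p` with finite Fisher information,
then the total variation of `p - φ` satisfies `∫ |p' - φ'| ≤ 4 √(I(X‖Z))`, where
`φ(x) = e^{-x²/2}/√(2π)` is the standard normal density (so `φ'(x) = -x φ(x)`) and
`I(X‖Z) = ∫_{p>0} (p'/p + x)² p dx` is the relative Fisher information. -/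
theorem tv_dist_le_four_sqrt_relative_fisher
    (p p' : ℝ → ℝ) (J : ℝ)
    (hnn : ∀ x, 0 ≤ p x) (hint : Integrable p) (h1 : ∫ x, p x = 1)
    (hFTC : ∀ a b : ℝ, p b - p a = ∫ x in a..b, p' x)
    (hconv : ∀ x, p x = 0 → p' x = 0)
    (hmean : ∫ x, x * p x = 0) (hmean_int : Integrable (fun x => x * p x))
    (hvar : ∫ x, x ^ 2 * p x = 1) (hvar_int : Integrable (fun x => x ^ 2 * p x))
    (hIfin : IntegrableOn (fun x => (p' x) ^ 2 / p x) {x | 0 < p x})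
    (hJfin : IntegrableOn (fun x => (p' x / p x + x) ^ 2 * p x) {x | 0 < p x})
    (hJ : J = ∫ x in {x | 0 < p x}, (p' x / p x + x) ^ 2 * p x) :
    ∫ x, |p' x + x * (Real.exp (-x ^ 2 / 2) / Real.sqrt (2 * π))| ≤ 4 * Real.sqrt J := by
  have hp : HasLocIntegrableDeriv p p' :=
    ⟨(integrable_deriv_of_fisher_integrands hnn hint hconv hIfin hJfin).locallyIntegrable, hFTC⟩
  rw [hJ]
  exact (tv_dist_le_four_sqrt_relative_fisher_general hnn h1 hp hJfin).trans (by gcongr; norm_num)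
end

section
/- Any probability density p on ℝ of bounded total variation can be represented as a convex mixture of uniform densities on intervals, p(x) = ∫ q(x) dπ(q) a.e., with a mixing probability measure π on the set of uniform densities satisfying ‖p‖_TV = ∫ ‖q‖_TV dπ(q). -/
open MeasureTheory

open scoped ENNReal

/-!
Write `p = f - g` with `f`, `g` monotone and `f + g` the variation function of `p`. Since `p`
vanishes at `±∞`, the functions `f` and `g` have the same limits `m` and `M` there, and
`2 * (M - m)` is at most the total variation. A level `u` between `m` and `M` is crossed first by
`f` and later by `g`, and `p x` is the Lebesgue measure of the levels `u` whose interval between the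
two crossings contains `x`. This writes `p` as a superposition of indicators of intervals, of total
mass at most half the variation. The mass is smaller than that when `p` has isolated spikes that no
a.e. representation can see; cutting intervals into halves raises it to exactly half the variation.
Weighting each interval by its length turns indicators into uniform densities.
-/

open Set Filter Topology

namespace UniformMixture

section Levels

lemma ae_continuousWithinAt_Iio_of_monotone {f : ℝ → ℝ} (hf : Monotone f) :
    ∀ᵐ x, ContinuousWithinAt f (Iio x) x := by
  have hcont : ∀ᵐ x, ContinuousAt f x :=
    ae_iff.2 (hf.countable_not_continuousAt.measure_zero volume)
  exact hcont.mono fun x hx => hx.continuousWithinAt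

/-- A monotone function increasing from the limit `m` at `-∞` to the limit `M` at `+∞`: a
distribution function without normalization and without one-sided continuity. -/
structure MonotoneFromTo (f : ℝ → ℝ) (m M : ℝ) : Prop where
  monotone : Monotone f
  tendsto_atBot : Tendsto f atBot (𝓝 m)
  tendsto_atTop : Tendsto f atTop (𝓝 M)

/-- The point at which `f` first exceeds the level `u`: the generalized inverse of a monotone `f`.
It is a junk value unless `u` lies strictly between the limits of `f`. -/
noncomputable def crossing (f : ℝ → ℝ) (u : ℝ) : ℝ :=
  sInf {x | u < f x}

namespace MonotoneFromTo

variable {f g : ℝ → ℝ} {m M u x : ℝ}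

lemma mem_Icc (hf : MonotoneFromTo f m M) (x : ℝ) : f x ∈ Icc m M :=
  ⟨hf.monotone.le_of_tendsto hf.tendsto_atBot x, hf.monotone.ge_of_tendsto hf.tendsto_atTop x⟩

lemma nonempty_superlevel (hf : MonotoneFromTo f m M) (hu : u < M) : {x | u < f x}.Nonempty :=
  (hf.tendsto_atTop.eventually_const_lt hu).exists

lemma bddBelow_superlevel (hf : MonotoneFromTo f m M) (hu : m < u) : BddBelow {x | u < f x} := by
  obtain ⟨y, hy⟩ := (hf.tendsto_atBot.eventually_lt_const hu).exists
  exact ⟨y, fun x hx => (hf.monotone.reflect_lt (hy.trans hx)).le⟩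

lemma crossing_lt_iff (hf : MonotoneFromTo f m M) (hu : u ∈ Ioo m M)
    (hx : ContinuousWithinAt f (Iio x) x) : crossing f u < x ↔ u < f x := by
  rw [crossing, csInf_lt_iff (hf.bddBelow_superlevel hu.1) (hf.nonempty_superlevel hu.2)]
  constructor
  · rintro ⟨y, hy, hyx⟩
    exact hy.trans_le (hf.monotone hyx.le)
  · intro hux
    exact ((hx.eventually_const_lt hux).and self_mem_nhdsWithin).exists

lemma monotoneOn_crossing (hf : MonotoneFromTo f m M) : MonotoneOn (crossing f) (Ioo m M) :=
  fun _u hu _w hw huw => csInf_le_csInf (hf.bddBelow_superlevel hu.1)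
    (hf.nonempty_superlevel hw.2) fun _x hx => huw.trans_lt hx

lemma aemeasurable_crossing (hf : MonotoneFromTo f m M) :
    AEMeasurable (crossing f) (volume.restrict (Ioo m M)) :=
  aemeasurable_restrict_of_monotoneOn measurableSet_Ioo hf.monotoneOn_crossing

lemma volume_crossing_lt_le (hf : MonotoneFromTo f m M) (hg : MonotoneFromTo g m M)
    (hfx : ContinuousWithinAt f (Iio x) x) (hgx : ContinuousWithinAt g (Iio x) x) :
    volume ({u | x ∈ Ioc (crossing f u) (crossing g u)} ∩ Ioo m M)
      = ENNReal.ofReal (f x - g x) := by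
  have hlevels : {u | x ∈ Ioc (crossing f u) (crossing g u)} ∩ Ioo m M
      = Ico (g x) (f x) ∩ Ioo m M := by
    ext u
    refine and_congr_left fun hu => ?_
    change crossing f u < x ∧ x ≤ crossing g u ↔ g x ≤ u ∧ u < f x
    rw [hf.crossing_lt_iff hu hfx, ← not_lt, hg.crossing_lt_iff hu hgx, not_lt, and_comm]
  have hsub : Ioo (g x) (f x) ⊆ Ico (g x) (f x) ∩ Ioo m M :=
    subset_inter Ioo_subset_Ico_self (Ioo_subset_Ioo (hg.mem_Icc x).1 (hf.mem_Icc x).2)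
  rw [hlevels]
  refine le_antisymm ?_ ?_
  · exact (measure_mono inter_subset_left).trans_eq Real.volume_Ico
  · exact Real.volume_Ioo.symm.trans_le (measure_mono hsub)

end MonotoneFromTo

end Levels

section Jordan

lemma tendsto_zero_atTop_of_integrable {E : Type*} [NormedAddCommGroup E] [CompleteSpace E]
    {p : ℝ → E} (hp : BoundedVariationOn p univ) (hint : Integrable p) :
    Tendsto p atTop (𝓝 0) := by
  obtain ⟨l, hl⟩ : ∃ l, Tendsto p atTop (𝓝 l) := by simpa using hp.exists_tendsto_atTop
  have hvol : ∀ s ∈ (atTop : Filter ℝ), volume s = ∞ := fun s hs => by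
    obtain ⟨b, hb⟩ := mem_atTop_sets.1 hs
    exact measure_mono_top hb Real.volume_Ici
  rwa [(hint.integrableAtFilter atTop).eq_zero_of_tendsto hvol hl] at hl

lemma tendsto_zero_atBot_of_integrable {E : Type*} [NormedAddCommGroup E] [CompleteSpace E]
    {p : ℝ → E} (hp : BoundedVariationOn p univ) (hint : Integrable p) :
    Tendsto p atBot (𝓝 0) := by
  obtain ⟨l, hl⟩ : ∃ l, Tendsto p atBot (𝓝 l) := by simpa using hp.exists_tendsto_atBot
  have hvol : ∀ s ∈ (atBot : Filter ℝ), volume s = ∞ := fun s hs => by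
    obtain ⟨b, hb⟩ := mem_atBot_sets.1 hs
    exact measure_mono_top hb Real.volume_Iic
  rwa [(hint.integrableAtFilter atBot).eq_zero_of_tendsto hvol hl] at hl

lemma exists_monotoneFromTo_variationOnFromTo {E : Type*} [PseudoEMetricSpace E]
    {p : ℝ → E} (hp : BoundedVariationOn p univ) (a : ℝ) :
    ∃ m M, MonotoneFromTo (variationOnFromTo p univ a) m M ∧
      M - m ≤ (eVariationOn p univ).toReal := by
  have hloc := hp.locallyBoundedVariationOn
  have hmono : Monotone (variationOnFromTo p univ a) :=
    monotoneOn_univ.1 (variationOnFromTo.monotoneOn hloc (mem_univ a))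
  have hbdd : ∀ x, |variationOnFromTo p univ a x| ≤ (eVariationOn p univ).toReal := fun x =>
    variationOnFromTo.abs_le_eVariationOn hp
  have hfromTo : MonotoneFromTo (variationOnFromTo p univ a)
      (⨅ x, variationOnFromTo p univ a x) (⨆ x, variationOnFromTo p univ a x) :=
    ⟨hmono,
      tendsto_atBot_ciInf hmono ⟨_, forall_mem_range.2 fun x => (abs_le.1 (hbdd x)).1⟩,
      tendsto_atTop_ciSup hmono ⟨_, forall_mem_range.2 fun x => (abs_le.1 (hbdd x)).2⟩⟩
  refine ⟨_, _, hfromTo, ?_⟩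
  have hosc : ∀ x y, variationOnFromTo p univ a y - variationOnFromTo p univ a x
      ≤ (eVariationOn p univ).toReal := fun x y => by
    rw [variationOnFromTo.sub_right hloc (mem_univ _) (mem_univ _) (mem_univ _)]
    exact (le_abs_self _).trans (variationOnFromTo.abs_le_eVariationOn hp)
  have hosc_top := fun x => le_of_tendsto' (hfromTo.tendsto_atTop.sub_const _) (hosc x)
  exact le_of_tendsto' (hfromTo.tendsto_atBot.const_sub _) hosc_top

lemma exists_monotoneFromTo_sub {p : ℝ → ℝ} (hp : BoundedVariationOn p univ)
    (hbot : Tendsto p atBot (𝓝 0)) (htop : Tendsto p atTop (𝓝 0)) :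
    ∃ f g m M, MonotoneFromTo f m M ∧ MonotoneFromTo g m M ∧ p = f - g ∧
      2 * (M - m) ≤ (eVariationOn p univ).toReal := by
  obtain ⟨m, M, hv, hle⟩ := exists_monotoneFromTo_variationOnFromTo hp 0
  obtain ⟨f, g, hf, hg, hpfg, hsum⟩ :=
    hp.locallyBoundedVariationOn.exists_monotoneOn_sub_monotoneOn'
  have hsub : ∀ x, p x = f x - g x := congrFun hpfg
  have hadd : ∀ x, f x - f 0 + (g x - g 0) = variationOnFromTo p univ 0 x := fun x =>
    hsum 0 (mem_univ 0) x (mem_univ x)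
  have hlim : ∀ (l : Filter ℝ) (c : ℝ), Tendsto (variationOnFromTo p univ 0) l (𝓝 c) →
      Tendsto p l (𝓝 0) →
      Tendsto f l (𝓝 ((c + (f 0 + g 0)) / 2)) ∧ Tendsto g l (𝓝 ((c + (f 0 + g 0)) / 2)) := by
    intro l c hc hzero
    have hf_eq : ∀ x, (variationOnFromTo p univ 0 x + p x + (f 0 + g 0)) / 2 = f x := fun x => by
      linarith [hsub x, hadd x]
    have hg_eq : ∀ x, (variationOnFromTo p univ 0 x - p x + (f 0 + g 0)) / 2 = g x := fun x => by
      linarith [hsub x, hadd x]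
    constructor
    · simpa only [hf_eq, add_zero] using ((hc.add hzero).add_const (f 0 + g 0)).div_const 2
    · simpa only [hg_eq, sub_zero] using ((hc.sub hzero).add_const (f 0 + g 0)).div_const 2
  obtain ⟨hf_bot, hg_bot⟩ := hlim atBot m hv.tendsto_atBot hbot
  obtain ⟨hf_top, hg_top⟩ := hlim atTop M hv.tendsto_atTop htop
  exact ⟨f, g, _, _, ⟨monotoneOn_univ.1 hf, hf_bot, hf_top⟩, ⟨monotoneOn_univ.1 hg, hg_bot, hg_top⟩,
    hpfg, by linarith⟩

end Jordan

/-- `ν`, a measure on pairs `(a, b)` with `a < b`, writes `p` a.e. as the superposition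
`∫ 1_{(a,b]} dν(a,b)`. Half-open intervals are used because they can be cut into two pieces of the
same kind. -/
structure IsLayering (ν : Measure (ℝ × ℝ)) (p : ℝ → ℝ≥0∞) : Prop where
  ae_lt : ∀ᵐ ab ∂ν, ab.1 < ab.2
  ae_measure_eq : ∀ᵐ x, ν {ab | x ∈ Ioc ab.1 ab.2} = p x

lemma measurableSet_mem_Ioc (x : ℝ) : MeasurableSet {ab : ℝ × ℝ | x ∈ Ioc ab.1 ab.2} :=
  (measurableSet_lt measurable_fst measurable_const).inter
    (measurableSet_le measurable_const measurable_snd)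

lemma measurableSet_mem_Ioo (x : ℝ) : MeasurableSet {ab : ℝ × ℝ | x ∈ Ioo ab.1 ab.2} :=
  (measurableSet_lt measurable_fst measurable_const).inter
    (measurableSet_lt measurable_const measurable_snd)

lemma measurableSet_fst_lt_snd : MeasurableSet {ab : ℝ × ℝ | ab.1 < ab.2} :=
  measurableSet_lt measurable_fst measurable_snd

section LevelMeasure

variable {f g : ℝ → ℝ} {m M : ℝ}

/-- The image of Lebesgue measure on the levels in `(m, M)` under the map sending a level to the
interval between its crossings by `f` and by `g`, empty intervals being discarded. -/
noncomputable def levelMeasure (f g : ℝ → ℝ) (m M : ℝ) : Measure (ℝ × ℝ) :=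
  ((volume.restrict (Ioo m M)).map fun u => (crossing f u, crossing g u)).restrict
    {ab | ab.1 < ab.2}

lemma isLayering_levelMeasure (hf : MonotoneFromTo f m M) (hg : MonotoneFromTo g m M) :
    IsLayering (levelMeasure f g m M) fun x => ENNReal.ofReal (f x - g x) where
  ae_lt := ae_restrict_mem measurableSet_fst_lt_snd
  ae_measure_eq := by
    filter_upwards [ae_continuousWithinAt_Iio_of_monotone hf.monotone,
      ae_continuousWithinAt_Iio_of_monotone hg.monotone] with x hfx hgx
    have hsub : {ab : ℝ × ℝ | x ∈ Ioc ab.1 ab.2} ⊆ {ab | ab.1 < ab.2} :=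
      fun ab hab => hab.1.trans_le hab.2
    rw [levelMeasure, Measure.restrict_eq_self _ hsub,
      Measure.map_apply_of_aemeasurable
        (hf.aemeasurable_crossing.prodMk hg.aemeasurable_crossing) (measurableSet_mem_Ioc x),
      Measure.restrict_apply' measurableSet_Ioo]
    exact hf.volume_crossing_lt_le hg hfx hgx

lemma levelMeasure_univ_le (hf : MonotoneFromTo f m M) (hg : MonotoneFromTo g m M) :
    levelMeasure f g m M univ ≤ ENNReal.ofReal (M - m) := by
  refine (Measure.restrict_apply_le _ _).trans_eq ?_
  rw [Measure.map_apply_of_aemeasurable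
      (hf.aemeasurable_crossing.prodMk hg.aemeasurable_crossing) .univ,
    preimage_univ, Measure.restrict_apply_univ, Real.volume_Ioo]

end LevelMeasure

lemma exists_isLayering_measureReal_le {p : ℝ → ℝ} (hint : Integrable p)
    (hp : BoundedVariationOn p univ) :
    ∃ ν : Measure (ℝ × ℝ), IsFiniteMeasure ν ∧ IsLayering ν (fun x => ENNReal.ofReal (p x)) ∧
      ν.real univ ≤ (eVariationOn p univ).toReal / 2 := by
  obtain ⟨f, g, m, M, hf, hg, hpfg, hle⟩ := exists_monotoneFromTo_sub hp
    (tendsto_zero_atBot_of_integrable hp hint) (tendsto_zero_atTop_of_integrable hp hint)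
  have hmass : levelMeasure f g m M univ ≤ ENNReal.ofReal (M - m) := levelMeasure_univ_le hf hg
  have hmM : m ≤ M := (hf.mem_Icc 0).1.trans (hf.mem_Icc 0).2
  refine ⟨levelMeasure f g m M, ⟨hmass.trans_lt ENNReal.ofReal_lt_top⟩, ?_, ?_⟩
  · simpa only [hpfg, Pi.sub_apply] using isLayering_levelMeasure hf hg
  · have := ENNReal.toReal_le_of_le_ofReal (sub_nonneg.2 hmM) hmass
    rw [measureReal_def]
    linarith

section Bisection

/-- Replaces each interval `(a, b]` charged by `ν` by its two halves. -/
noncomputable def bisection (ν : Measure (ℝ × ℝ)) : Measure (ℝ × ℝ) :=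
  ν.map (fun ab => (ab.1, (ab.1 + ab.2) / 2)) + ν.map (fun ab => ((ab.1 + ab.2) / 2, ab.2))

lemma measurable_leftHalf : Measurable fun ab : ℝ × ℝ => (ab.1, (ab.1 + ab.2) / 2) := by fun_prop

lemma measurable_rightHalf : Measurable fun ab : ℝ × ℝ => ((ab.1 + ab.2) / 2, ab.2) := by fun_prop

variable {ν ν' : Measure (ℝ × ℝ)} {p : ℝ → ℝ≥0∞}

instance [IsFiniteMeasure ν] : IsFiniteMeasure (bisection ν) := by
  unfold bisection
  infer_instance

lemma measureReal_bisection_univ [IsFiniteMeasure ν] :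
    (bisection ν).real univ = 2 * ν.real univ := by
  rw [bisection, measureReal_add_apply, map_measureReal_apply measurable_leftHalf .univ,
    map_measureReal_apply measurable_rightHalf .univ, preimage_univ, preimage_univ, two_mul]

lemma bisection_mem_Ioc (ν : Measure (ℝ × ℝ)) (x : ℝ) :
    bisection ν {ab | x ∈ Ioc ab.1 ab.2} = ν {ab | x ∈ Ioc ab.1 ab.2} := by
  rw [bisection, Measure.add_apply, Measure.map_apply measurable_leftHalf (measurableSet_mem_Ioc x),
    Measure.map_apply measurable_rightHalf (measurableSet_mem_Ioc x),
    ← measure_union _ (measurable_rightHalf (measurableSet_mem_Ioc x))]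
  · congr 1
    ext ⟨a, b⟩
    simp only [mem_union, mem_preimage, mem_ofPred_eq, mem_Ioc]
    grind
  · exact Set.disjoint_left.2 fun ab hleft hright => hleft.2.not_gt hright.1

protected lemma IsLayering.bisection (h : IsLayering ν p) : IsLayering (bisection ν) p where
  ae_lt := by
    rw [bisection, ae_add_measure_iff,
      ae_map_iff measurable_leftHalf.aemeasurable measurableSet_fst_lt_snd,
      ae_map_iff measurable_rightHalf.aemeasurable measurableSet_fst_lt_snd]
    exact ⟨h.ae_lt.mono fun ab hab => left_lt_add_div_two.2 hab,
      h.ae_lt.mono fun ab hab => add_div_two_lt_right.2 hab⟩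
  ae_measure_eq := by simpa only [bisection_mem_Ioc] using h.ae_measure_eq

lemma IsLayering.exists_measureReal_eq_two_pow_mul [IsFiniteMeasure ν] (h : IsLayering ν p)
    (n : ℕ) : ∃ ν' : Measure (ℝ × ℝ), IsFiniteMeasure ν' ∧ IsLayering ν' p ∧
      ν'.real univ = 2 ^ n * ν.real univ := by
  induction n with
  | zero => exact ⟨ν, inferInstance, h, by simp⟩
  | succ n ih =>
    obtain ⟨ν', _, hν', hmass⟩ := ih
    refine ⟨bisection ν', inferInstance, hν'.bisection, ?_⟩
    rw [measureReal_bisection_univ, hmass, pow_succ']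
    ring

lemma IsLayering.convexCombination (h : IsLayering ν p) (h' : IsLayering ν' p) {s t : ℝ≥0∞}
    (hst : s + t = 1) : IsLayering (s • ν + t • ν') p where
  ae_lt := ae_add_measure_iff.2
    ⟨Measure.ae_smul_measure h.ae_lt s, Measure.ae_smul_measure h'.ae_lt t⟩
  ae_measure_eq := by
    filter_upwards [h.ae_measure_eq, h'.ae_measure_eq] with x hx hx'
    rw [Measure.add_apply, Measure.smul_apply, Measure.smul_apply, hx, hx', smul_eq_mul,
      smul_eq_mul, ← add_mul, hst, one_mul]

lemma IsLayering.exists_measureReal_eq [IsFiniteMeasure ν] (h : IsLayering ν p) (hν : ν ≠ 0)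
    {w : ℝ} (hw : ν.real univ ≤ w) :
    ∃ ν' : Measure (ℝ × ℝ), IsFiniteMeasure ν' ∧ IsLayering ν' p ∧ ν'.real univ = w := by
  have : NeZero ν := ⟨hν⟩
  have hpos : 0 < ν.real univ := measureReal_univ_pos
  obtain ⟨n, hn⟩ := pow_unbounded_of_one_lt (w / ν.real univ) one_lt_two
  obtain ⟨ν₂, _, hν₂, hmass⟩ := h.exists_measureReal_eq_two_pow_mul n
  have hw₂ : w ≤ ν₂.real univ := by
    rw [hmass]
    exact ((div_lt_iff₀ hpos).1 hn).le
  obtain ⟨s, t, hs, ht, hst, hcomb⟩ : w ∈ segment ℝ (ν.real univ) (ν₂.real univ) := by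
    rw [segment_eq_Icc (hw.trans hw₂)]
    exact ⟨hw, hw₂⟩
  have hst' : ENNReal.ofReal s + ENNReal.ofReal t = 1 := by
    rw [← ENNReal.ofReal_add hs ht, hst, ENNReal.ofReal_one]
  have := ν.smul_finite (c := ENNReal.ofReal s) ENNReal.ofReal_ne_top
  have := ν₂.smul_finite (c := ENNReal.ofReal t) ENNReal.ofReal_ne_top
  refine ⟨_, inferInstance, h.convexCombination hν₂ hst', ?_⟩
  rw [measureReal_add_apply, measureReal_ennreal_smul_apply, measureReal_ennreal_smul_apply,
    ENNReal.toReal_ofReal hs, ENNReal.toReal_ofReal ht]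
  exact hcomb

end Bisection

section LengthWeighting

/-- The measure `(b - a) dν(a, b)`. Since `1_{(a,b)} = (b - a) q_{a,b}`, it is the mixing measure
that represents by uniform densities what `ν` represents by indicators. -/
noncomputable def lengthWeighted (ν : Measure (ℝ × ℝ)) : Measure (ℝ × ℝ) :=
  ν.withDensity fun ab => ENNReal.ofReal (ab.2 - ab.1)

lemma measurable_length : Measurable fun ab : ℝ × ℝ => ENNReal.ofReal (ab.2 - ab.1) := by fun_prop

variable {ν : Measure (ℝ × ℝ)}

lemma lengthWeighted_univ [SFinite ν] :
    lengthWeighted ν univ = ∫⁻ x, ν {ab | x ∈ Ioc ab.1 ab.2} := by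
  have hmeas : MeasurableSet {z : ℝ × (ℝ × ℝ) | z.1 ∈ Ioc z.2.1 z.2.2} :=
    (measurableSet_lt measurable_snd.fst measurable_fst).inter
      (measurableSet_le measurable_fst measurable_snd.snd)
  calc lengthWeighted ν univ
      = ∫⁻ ab, volume (Ioc ab.1 ab.2) ∂ν := by
        simp only [lengthWeighted, withDensity_apply _ .univ, Measure.restrict_univ,
          Real.volume_Ioc]
    _ = (volume.prod ν) {z | z.1 ∈ Ioc z.2.1 z.2.2} := (Measure.prod_apply_symm hmeas).symm
    _ = ∫⁻ x, ν {ab | x ∈ Ioc ab.1 ab.2} := Measure.prod_apply hmeas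

lemma integral_uniform_lengthWeighted (ν : Measure (ℝ × ℝ)) (x : ℝ) :
    ∫ ab, (Ioo ab.1 ab.2).indicator (fun _ => (ab.2 - ab.1)⁻¹) x ∂lengthWeighted ν
      = ν.real {ab | x ∈ Ioo ab.1 ab.2} := by
  rw [lengthWeighted, integral_withDensity_eq_integral_toReal_smul measurable_length
    (ae_of_all _ fun _ => ENNReal.ofReal_lt_top),
    ← integral_indicator_one (measurableSet_mem_Ioo x)]
  congr 1 with ab
  by_cases hx : x ∈ Ioo ab.1 ab.2
  · have hlen : 0 < ab.2 - ab.1 := sub_pos.2 (hx.1.trans hx.2)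
    rw [indicator_of_mem hx, indicator_of_mem (s := {ab : ℝ × ℝ | x ∈ Ioo ab.1 ab.2}) hx,
      ENNReal.toReal_ofReal hlen.le, smul_eq_mul, mul_inv_cancel₀ hlen.ne', Pi.one_apply]
  · rw [indicator_of_notMem hx, indicator_of_notMem (s := {ab : ℝ × ℝ | x ∈ Ioo ab.1 ab.2}) hx,
      smul_zero]

lemma lintegral_two_div_length_lengthWeighted (hν : ∀ᵐ ab ∂ν, ab.1 < ab.2) :
    ∫⁻ ab, ENNReal.ofReal (2 / (ab.2 - ab.1)) ∂lengthWeighted ν = 2 * ν univ := by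
  rw [lengthWeighted, lintegral_withDensity_eq_lintegral_mul _ measurable_length (by fun_prop),
    ← lintegral_const]
  refine lintegral_congr_ae (hν.mono fun ab hab => ?_)
  have hlen : 0 < ab.2 - ab.1 := sub_pos.2 hab
  rw [Pi.mul_apply, ← ENNReal.ofReal_mul hlen.le, mul_div_cancel₀ _ hlen.ne', ENNReal.ofReal_ofNat]

lemma ae_measure_mem_Ioo_eq_mem_Ioc [SFinite ν] :
    ∀ᵐ x, ν {ab | x ∈ Ioo ab.1 ab.2} = ν {ab | x ∈ Ioc ab.1 ab.2} := by
  have hcount : {x : ℝ | 0 < ν {ab | ab.2 = x}}.Countable :=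
    Measure.countable_meas_level_set_pos measurable_snd
  filter_upwards [measure_eq_zero_iff_ae_notMem.1 (hcount.measure_zero volume)] with x hx
  have hne : ∀ᵐ ab ∂ν, ab.2 ≠ x := by
    simpa [ae_iff] using hx
  refine measure_congr (hne.mono fun ab hab => propext ?_)
  exact and_congr_right fun _ => (le_iff_lt_or_eq.trans (or_iff_left hab.symm)).symm

variable {p : ℝ → ℝ≥0∞}

protected lemma IsLayering.lengthWeighted_univ [SFinite ν] (h : IsLayering ν p) :
    lengthWeighted ν univ = ∫⁻ x, p x := by
  rw [UniformMixture.lengthWeighted_univ, lintegral_congr_ae h.ae_measure_eq]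

lemma IsLayering.ae_integral_uniform_lengthWeighted [SFinite ν] (h : IsLayering ν p) :
    ∀ᵐ x, ∫ ab, (Ioo ab.1 ab.2).indicator (fun _ => (ab.2 - ab.1)⁻¹) x ∂lengthWeighted ν
      = (p x).toReal := by
  filter_upwards [h.ae_measure_eq, ae_measure_mem_Ioo_eq_mem_Ioc (ν := ν)] with x hx hIoo
  rw [integral_uniform_lengthWeighted, measureReal_def, hIoo, hx]

end LengthWeighting

lemma exists_isLayering_measureReal_eq {p : ℝ → ℝ} (hint : Integrable p)
    (hp : BoundedVariationOn p univ) (hpos : 0 < ∫ x, p x) :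
    ∃ ν : Measure (ℝ × ℝ), IsFiniteMeasure ν ∧ IsLayering ν (fun x => ENNReal.ofReal (p x)) ∧
      ν.real univ = (eVariationOn p univ).toReal / 2 := by
  obtain ⟨ν, _, hν, hmass⟩ := exists_isLayering_measureReal_le hint hp
  refine hν.exists_measureReal_eq ?_ hmass
  rintro rfl
  have hp_nonpos : p ≤ᵐ[volume] 0 :=
    hν.ae_measure_eq.mono fun x hx => ENNReal.ofReal_eq_zero.1 hx.symm
  exact hpos.not_ge (integral_nonpos_of_ae hp_nonpos)

end UniformMixture

open UniformMixture

/-- Any probability density `p` on `ℝ` of bounded total variation can be represented as a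
convex mixture of uniform densities on intervals: there is a mixing probability measure `mix`
on pairs `(a,b)` with `a < b` such that `p(x) = ∫ q_{a,b}(x) d mix(a,b)` a.e., where
`q_{a,b} = (b-a)⁻¹ 1_{(a,b)}`, and moreover `‖p‖_TV = ∫ ‖q_{a,b}‖_TV d mix = ∫ 2/(b-a) d mix`. -/
theorem density_mixture_of_uniforms
    (p : ℝ → ℝ)
    (hnn : ∀ x, 0 ≤ p x) (hint : Integrable p) (h1 : ∫ x, p x = 1)
    (hTV : eVariationOn p Set.univ ≠ ⊤) :
    ∃ mix : Measure (ℝ × ℝ), IsProbabilityMeasure mix ∧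
      (∀ᵐ ab ∂mix, ab.1 < ab.2) ∧
      (∀ᵐ x ∂(volume : Measure ℝ),
        p x = ∫ ab, Set.indicator (Set.Ioo ab.1 ab.2) (fun _ => (ab.2 - ab.1)⁻¹) x ∂mix) ∧
      eVariationOn p Set.univ = ∫⁻ ab, ENNReal.ofReal (2 / (ab.2 - ab.1)) ∂mix := by
  obtain ⟨ν, _, hν, hmass⟩ := exists_isLayering_measureReal_eq hint hTV (h1 ▸ one_pos)
  refine ⟨lengthWeighted ν, ⟨?_⟩, ?_, ?_, ?_⟩
  · rw [hν.lengthWeighted_univ, ← ofReal_integral_eq_lintegral_ofReal hint (ae_of_all _ hnn), h1,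
      ENNReal.ofReal_one]
  · exact (withDensity_absolutelyContinuous ν _).ae_le hν.ae_lt
  · filter_upwards [hν.ae_integral_uniform_lengthWeighted] with x hx
    rw [hx, ENNReal.toReal_ofReal (hnn x)]
  · rw [lintegral_two_div_length_lengthWeighted hν.ae_lt, ← ENNReal.toReal_eq_toReal_iff' hTV
      (by finiteness), ENNReal.toReal_mul, ← measureReal_def, hmass, ENNReal.toReal_ofNat]
    ring
end

section
/- Let X have finite second moment and characteristic function f such that ∫ |t|(|f(t)| + |f'(t)| + |f''(t)|) dt < ∞. Then X has a continuously differentiable density p with ∫ |p'(x)| dx ≤ (1/2) ∫ (|t f''(t)| + 2|f'(t)| + |t f(t)|) dt. -/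
open MeasureTheory Real ProbabilityTheory

/-!
If `p` is the Fourier inverse of the characteristic function `f`, then `p'` is up to a factor `-i`
the Fourier inverse of `h t = t f t`. Multiplying a Fourier inverse by `x²` amounts to replacing the
function by minus its second derivative, so `2π (1 + x²) |p' x| ≤ ∫ (|h| + |h''|)`, where
`h'' t = 2 f' t + t f'' t`. Integrating against `∫ (1 + x²)⁻¹ dx = π` produces the constant `1 / 2`.

That `p` is a density is again seen on characteristic functions: they show that the law of `X` plus
the measure with density `p⁻` is the measure with density `p⁺`, so `p⁻` vanishes almost everywhere.
-/

open scoped FourierTransform InnerProductSpace ComplexConjugate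

section Integrability

variable {𝕜 E : Type*} [RCLike 𝕜] [MeasurableSpace 𝕜] [OpensMeasurableSpace 𝕜] {μ : Measure 𝕜}
  [NormedAddCommGroup E] [NormedSpace 𝕜 E] {g : 𝕜 → E}

lemma integrable_of_integrable_id_smul (hg : LocallyIntegrable g μ)
    (h : Integrable (fun t => t • g t) μ) : Integrable g μ := by
  refine integrable_iff_integrableAtFilter_cocompact.2 ⟨?_, hg⟩
  refine ⟨(Metric.closedBall 0 1)ᶜ, (isCompact_closedBall 0 1).compl_mem_cocompact, ?_⟩
  refine Integrable.mono h.integrableOn hg.aestronglyMeasurable.restrict ?_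
  filter_upwards [ae_restrict_mem Metric.isClosed_closedBall.measurableSet.compl] with t ht
  have one_le_norm : 1 ≤ ‖t‖ := by simpa using (not_le.1 (mt mem_closedBall_zero_iff.2 ht)).le
  rw [norm_smul]
  exact le_mul_of_one_le_left (norm_nonneg _) one_le_norm

lemma integrable_id_smul_of_norm_le [SecondCountableTopologyEither 𝕜 E] {F : 𝕜 → ℝ}
    (hg : AEStronglyMeasurable g μ) (hF : Integrable (fun t => ‖t‖ * F t) μ)
    (hle : ∀ t, ‖g t‖ ≤ F t) : Integrable (fun t => t • g t) μ :=
  hF.mono' (aestronglyMeasurable_id.smul hg) <| .of_forall fun t => by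
    rw [norm_smul]
    exact mul_le_mul_of_nonneg_left (hle t) (norm_nonneg t)

end Integrability

section Density

variable {α : Type*} [MeasurableSpace α] {μ ν : Measure α} {q : α → ℝ}

lemma withDensity_ofReal_mutuallySingular_of_aemeasurable (hq : AEMeasurable q ν) :
    (ν.withDensity fun x => ENNReal.ofReal (q x)) ⟂ₘ
      ν.withDensity fun x => ENNReal.ofReal (-q x) := by
  have withDensity_mk (φ : ℝ → ENNReal) :
      ν.withDensity (fun x => φ (q x)) = ν.withDensity (fun x => φ (hq.mk q x)) :=
    withDensity_congr_ae (hq.ae_eq_mk.fun_comp φ)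
  rw [withDensity_mk ENNReal.ofReal, withDensity_mk fun r => ENNReal.ofReal (-r)]
  exact withDensity_ofReal_mutuallySingular hq.measurable_mk

lemma eq_withDensity_ofReal_of_add_eq (hq : AEMeasurable q ν)
    (h : μ + ν.withDensity (fun x => ENNReal.ofReal (-q x)) =
      ν.withDensity (fun x => ENNReal.ofReal (q x))) :
    μ = ν.withDensity (fun x => ENNReal.ofReal (q x)) := by
  have neg_le_pos : ν.withDensity (fun x => ENNReal.ofReal (-q x)) ≤
      ν.withDensity (fun x => ENNReal.ofReal (q x)) := h ▸ Measure.le_add_left le_rfl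
  have neg_eq_zero : ν.withDensity (fun x => ENNReal.ofReal (-q x)) = 0 :=
    Measure.eq_zero_of_absolutelyContinuous_of_mutuallySingular neg_le_pos.absolutelyContinuous
      (withDensity_ofReal_mutuallySingular_of_aemeasurable hq).symm
  rw [← h, neg_eq_zero, add_zero]

variable {V : Type*} [NormedAddCommGroup V] [InnerProductSpace ℝ V] [MeasurableSpace V]
  {μ ν : Measure V}

lemma charFun_withDensity_ofReal {q : V → ℝ} (hq : AEMeasurable q ν) (t : V) :
    charFun (ν.withDensity fun x => ENNReal.ofReal (q x)) t =
      ∫ x, Complex.exp (⟪x, t⟫_ℝ * Complex.I) * (max (q x) 0 : ℝ) ∂ν := by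
  rw [charFun_apply, integral_withDensity_eq_integral_toReal_smul₀ hq.ennreal_ofReal (by simp)]
  simp only [ENNReal.toReal_ofReal', Complex.real_smul, mul_comm]

variable [BorelSpace V] [SecondCountableTopology V]

lemma integrable_exp_inner_mul_I_mul {g : V → ℂ} (hg : Integrable g ν) (t : V) :
    Integrable (fun x => Complex.exp (⟪x, t⟫_ℝ * Complex.I) * g x) ν :=
  hg.bdd_mul (c := 1) (by fun_prop) <| .of_forall fun x => (Complex.norm_exp_ofReal_mul_I _).le

lemma charFun_add [IsFiniteMeasure μ] [IsFiniteMeasure ν] :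
    charFun (μ + ν) = charFun μ + charFun ν := by
  ext t
  have integrable_exp (ρ : Measure V) [IsFiniteMeasure ρ] :
      Integrable (fun x => Complex.exp (⟪x, t⟫_ℝ * Complex.I)) ρ := by
    simpa using integrable_exp_inner_mul_I_mul (integrable_const (1 : ℂ)) t
  exact integral_add_measure (integrable_exp μ) (integrable_exp ν)

variable [CompleteSpace V] [IsFiniteMeasure μ]

lemma eq_withDensity_ofReal_of_charFun_eq {q : V → ℝ} (hq : Integrable q ν)
    (h : ∀ t, charFun μ t = ∫ x, Complex.exp (⟪x, t⟫_ℝ * Complex.I) * q x ∂ν) :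
    μ = ν.withDensity (fun x => ENNReal.ofReal (q x)) := by
  have hq_neg : Integrable (fun x => -q x) ν := hq.neg
  have := isFiniteMeasure_withDensity_ofReal hq.2
  have := isFiniteMeasure_withDensity_ofReal hq_neg.2
  refine eq_withDensity_ofReal_of_add_eq hq.aemeasurable (Measure.ext_of_charFun ?_)
  ext t
  have exp_mul_integrable {r : V → ℝ} (hr : Integrable r ν) :
      Integrable (fun x => Complex.exp (⟪x, t⟫_ℝ * Complex.I) * r x) ν :=
    integrable_exp_inner_mul_I_mul hr.ofReal t
  have pos_part_eq (x : V) : ((max (q x) 0 : ℝ) : ℂ) = q x + (max (-q x) 0 : ℝ) := by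
    rw [← Complex.ofReal_add, ← sub_eq_iff_eq_add.1 (max_zero_sub_max_neg_zero_eq_self (q x))]
  rw [charFun_add, Pi.add_apply, h, charFun_withDensity_ofReal hq_neg.aemeasurable,
    charFun_withDensity_ofReal hq.aemeasurable,
    ← integral_add (exp_mul_integrable hq) (exp_mul_integrable hq_neg.pos_part)]
  simp only [pos_part_eq, mul_add]

lemma eq_withDensity_ofReal_re_of_charFun_eq {g : V → ℂ} (hg : Integrable g ν)
    (h : ∀ t, charFun μ t = ∫ x, Complex.exp (⟪x, t⟫_ℝ * Complex.I) * g x ∂ν) :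
    μ = ν.withDensity (fun x => ENNReal.ofReal (g x).re) := by
  refine eq_withDensity_ofReal_of_charFun_eq hg.re fun t => ?_
  have h_conj : charFun μ t = ∫ x, Complex.exp (⟪x, t⟫_ℝ * Complex.I) * conj (g x) ∂ν := by
    rw [← neg_neg t, charFun_neg, h, ← integral_conj]
    simp [← Complex.exp_conj]
  have hg_conj : Integrable (fun x => conj (g x)) ν := Complex.conjLIE.integrable_comp_iff.2 hg
  have re_eq (x : V) : ((g x).re : ℂ) = (g x + conj (g x)) / 2 := by
    rw [Complex.re_eq_add_conj]
  calc charFun μ t = (charFun μ t + charFun μ t) / 2 := (add_self_div_two _).symm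
    _ = ∫ x, (Complex.exp (⟪x, t⟫_ℝ * Complex.I) * g x +
          Complex.exp (⟪x, t⟫_ℝ * Complex.I) * conj (g x)) / 2 ∂ν := by
      rw [integral_div, integral_add (integrable_exp_inner_mul_I_mul hg t)
        (integrable_exp_inner_mul_I_mul hg_conj t), ← h, ← h_conj]
    _ = ∫ x, Complex.exp (⟪x, t⟫_ℝ * Complex.I) * (g x).re ∂ν := by
      simp only [re_eq, mul_add, mul_div_assoc, add_div]

end Density

section Derivative

variable {𝕜 E : Type*} [NontriviallyNormedField 𝕜] [NormedAddCommGroup E] [NormedSpace 𝕜 E]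
  {f f' f'' : 𝕜 → E} {t : 𝕜}

lemma hasDerivAt_id_smul (hd : HasDerivAt f (f' t) t) :
    HasDerivAt (fun t => t • f t) (t • f' t + f t) t := by
  simpa using! (hasDerivAt_id t).smul hd

lemma hasDerivAt_id_smul_deriv_add (hd : HasDerivAt f (f' t) t) (hd' : HasDerivAt f' (f'' t) t) :
    HasDerivAt (fun t => t • f' t + f t) (t • f'' t + (2 : 𝕜) • f' t) t := by
  simpa [two_smul, add_assoc] using! (hasDerivAt_id_smul hd').add hd

end Derivative

section CharFunInv

variable {E : Type*} [NormedAddCommGroup E] [NormedSpace ℂ E] {f f' f'' : ℝ → E}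

/-- The inverse Fourier transform `x ↦ (2π)⁻¹ ∫ e^{-itx} f(t) dt` in the normalization of
probability theory, which recovers an integrable density from its characteristic function. -/
noncomputable def charFunInv (f : ℝ → E) (x : ℝ) : E :=
  (2 * π)⁻¹ • ∫ t : ℝ, Complex.exp (-(t * x * Complex.I)) • f t

lemma charFunInv_eq_smul_fourier (f : ℝ → E) (x : ℝ) :
    charFunInv f x = (2 * π)⁻¹ • 𝓕 f (x / (2 * π)) := by
  have phase_eq (t : ℝ) : -2 * π * t * (x / (2 * π)) = -(t * x) := by field_simp
  rw [charFunInv, fourier_real_eq_integral_exp_smul]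
  simp_rw [phase_eq, Complex.ofReal_neg, Complex.ofReal_mul, neg_mul]

lemma norm_charFunInv_le (f : ℝ → E) (x : ℝ) : ‖charFunInv f x‖ ≤ (2 * π)⁻¹ * ∫ t, ‖f t‖ := by
  rw [charFunInv_eq_smul_fourier, norm_smul, norm_of_nonneg (by positivity)]
  gcongr
  exact VectorFourier.norm_fourierIntegral_le_integral_norm _ _ _ _ _

lemma continuous_charFunInv (hf : Integrable f) : Continuous (charFunInv f) := by
  have continuous_fourier : Continuous (𝓕 f) :=
    VectorFourier.fourierIntegral_continuous continuous_fourierChar (by exact continuous_inner) hf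
  rw [funext (charFunInv_eq_smul_fourier f)]
  fun_prop

lemma hasDerivAt_charFunInv (hf : Integrable f) (htf : Integrable fun t : ℝ => t • f t) (x : ℝ) :
    HasDerivAt (charFunInv f) (-Complex.I • charFunInv (fun t => t • f t) x) x := by
  have deriv_rescaled := ((hasDerivAt_fourier hf htf (x / (2 * π))).scomp x
    ((hasDerivAt_id x).div_const (2 * π))).const_smul (2 * π)⁻¹
  rw [funext (charFunInv_eq_smul_fourier f)]
  convert! deriv_rescaled using 1
  rw [charFunInv_eq_smul_fourier, smul_comm]
  congr 1
  rw [fourier_real_eq_integral_exp_smul, fourier_real_eq_integral_exp_smul, ← integral_smul,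
    ← integral_smul]
  congr 1
  ext t
  have : (π : ℂ) ≠ 0 := Complex.ofReal_ne_zero.2 pi_ne_zero
  simp only [← Complex.coe_smul, smul_smul]
  congr 1
  push_cast
  field_simp

lemma contDiff_one_charFunInv (hf : Integrable f) (htf : Integrable fun t : ℝ => t • f t) :
    ContDiff ℝ 1 (charFunInv f) := by
  have hasDeriv := hasDerivAt_charFunInv hf htf
  refine contDiff_one_iff_deriv.2 ⟨fun x => (hasDeriv x).differentiableAt, ?_⟩
  rw [funext fun x => (hasDeriv x).deriv]
  exact (continuous_charFunInv htf).const_smul _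

lemma charFunInv_of_hasDerivAt (hf : Integrable f) (hf' : Integrable f')
    (hd : ∀ t, HasDerivAt f (f' t) t) (x : ℝ) :
    charFunInv f' x = (Complex.I * x) • charFunInv f x := by
  obtain rfl : deriv f = f' := funext fun t => (hd t).deriv
  have : (π : ℂ) ≠ 0 := Complex.ofReal_ne_zero.2 pi_ne_zero
  rw [charFunInv_eq_smul_fourier, charFunInv_eq_smul_fourier, smul_comm,
    fourier_deriv hf (fun t => (hd t).differentiableAt) hf']
  congr 2
  push_cast
  field_simp

section SecondDerivative

variable (hf : Integrable f) (hf' : Integrable f') (hf'' : Integrable f'')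
  (hd : ∀ t, HasDerivAt f (f' t) t) (hd' : ∀ t, HasDerivAt f' (f'' t) t)

include hf hf' hf'' hd hd'

lemma norm_charFunInv_le_mul_inv_one_add_sq (x : ℝ) :
    ‖charFunInv f x‖ ≤ (2 * π)⁻¹ * ((∫ t, ‖f t‖) + ∫ t, ‖f'' t‖) * (1 + x ^ 2)⁻¹ := by
  have norm_deriv_two : ‖charFunInv f'' x‖ = x ^ 2 * ‖charFunInv f x‖ := by
    rw [charFunInv_of_hasDerivAt hf' hf'' hd', charFunInv_of_hasDerivAt hf hf' hd, smul_smul,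
      norm_smul]
    simp [← pow_two]
  rw [← div_eq_mul_inv, le_div_iff₀ (by positivity)]
  linarith [norm_charFunInv_le f x, norm_charFunInv_le f'' x]

lemma integrable_charFunInv : Integrable (charFunInv f) :=
  (integrable_inv_one_add_sq.const_mul _).mono' (continuous_charFunInv hf).aestronglyMeasurable <|
    .of_forall (norm_charFunInv_le_mul_inv_one_add_sq hf hf' hf'' hd hd')

lemma integral_norm_charFunInv_le :
    ∫ x, ‖charFunInv f x‖ ≤ (1 / 2) * ((∫ t, ‖f t‖) + ∫ t, ‖f'' t‖) :=
  calc ∫ x, ‖charFunInv f x‖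
      ≤ ∫ x : ℝ, (2 * π)⁻¹ * ((∫ t, ‖f t‖) + ∫ t, ‖f'' t‖) * (1 + x ^ 2)⁻¹ :=
        integral_mono (integrable_charFunInv hf hf' hf'' hd hd').norm
          (integrable_inv_one_add_sq.const_mul _)
          (norm_charFunInv_le_mul_inv_one_add_sq hf hf' hf'' hd hd')
    _ = (1 / 2) * ((∫ t, ‖f t‖) + ∫ t, ‖f'' t‖) := by
        rw [integral_const_mul, integral_univ_inv_one_add_sq]
        field_simp

end SecondDerivative

section Multiplication

variable (hf : Integrable f) (hf' : Integrable f') (htf : Integrable fun t : ℝ => t • f t)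
  (htf' : Integrable fun t : ℝ => t • f' t) (htf'' : Integrable fun t : ℝ => t • f'' t)
  (hd : ∀ t, HasDerivAt f (f' t) t) (hd' : ∀ t, HasDerivAt f' (f'' t) t)

include hf hf' htf htf' htf'' hd hd'

lemma integrable_charFunInv_id_smul : Integrable (charFunInv fun t => t • f t) :=
  integrable_charFunInv htf (htf'.add hf) (htf''.add (hf'.smul (2 : ℝ)))
    (fun t => hasDerivAt_id_smul (hd t)) (fun t => hasDerivAt_id_smul_deriv_add (hd t) (hd' t))

lemma integral_norm_charFunInv_id_smul_le :
    ∫ x, ‖charFunInv (fun t => t • f t) x‖ ≤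
      (1 / 2) * ∫ t, (|t| * ‖f'' t‖ + 2 * ‖f' t‖ + |t| * ‖f t‖) := by
  have integrable_deriv_two : Integrable fun t : ℝ => t • f'' t + (2 : ℝ) • f' t :=
    htf''.add (hf'.smul (2 : ℝ))
  have htf_norm : Integrable fun t => |t| * ‖f t‖ := by simpa [norm_smul] using htf.norm
  have htf''_norm : Integrable fun t => |t| * ‖f'' t‖ := by simpa [norm_smul] using htf''.norm
  have norm_deriv_two_le (t : ℝ) :
      ‖t • f'' t + (2 : ℝ) • f' t‖ ≤ |t| * ‖f'' t‖ + 2 * ‖f' t‖ := by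
    simpa [norm_smul] using norm_add_le (t • f'' t) ((2 : ℝ) • f' t)
  calc ∫ x, ‖charFunInv (fun t => t • f t) x‖
      ≤ (1 / 2) * ((∫ t, ‖t • f t‖) + ∫ t, ‖t • f'' t + (2 : ℝ) • f' t‖) :=
        integral_norm_charFunInv_le htf (htf'.add hf) integrable_deriv_two
          (fun t => hasDerivAt_id_smul (hd t))
          (fun t => hasDerivAt_id_smul_deriv_add (hd t) (hd' t))
    _ = (1 / 2) * ∫ t, (‖t • f'' t + (2 : ℝ) • f' t‖ + |t| * ‖f t‖) := by
        rw [integral_add integrable_deriv_two.norm htf_norm, add_comm]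
        simp only [norm_smul, norm_eq_abs]
    _ ≤ (1 / 2) * ∫ t, (|t| * ‖f'' t‖ + 2 * ‖f' t‖ + |t| * ‖f t‖) := by
        gcongr
        · exact integrable_deriv_two.norm.add htf_norm
        · exact (htf''_norm.add (hf'.norm.const_mul 2)).add htf_norm
        · exact fun t => add_le_add_left (norm_deriv_two_le t) _

end Multiplication

lemma abs_deriv_re_charFunInv_le {g : ℝ → ℂ} (hg : Integrable g)
    (htg : Integrable fun t : ℝ => t • g t) (x : ℝ) :
    |deriv (fun x => (charFunInv g x).re) x| ≤ ‖charFunInv (fun t => t • g t) x‖ := by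
  have hasDeriv_re : HasDerivAt (fun x => (charFunInv g x).re)
      (-Complex.I • charFunInv (fun t => t • g t) x).re x :=
    Complex.reCLM.hasFDerivAt.comp_hasDerivAt x (hasDerivAt_charFunInv hg htg x)
  rw [hasDeriv_re.deriv]
  simpa [norm_smul] using Complex.abs_re_le_norm (-Complex.I • charFunInv (fun t => t • g t) x)

lemma integral_abs_deriv_re_charFunInv_le {g : ℝ → ℂ} (hg : Integrable g)
    (htg : Integrable fun t : ℝ => t • g t) (hi : Integrable (charFunInv fun t => t • g t)) :
    ∫ x, |deriv (fun x => (charFunInv g x).re) x| ≤ ∫ x, ‖charFunInv (fun t => t • g t) x‖ :=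
  integral_mono_of_nonneg (.of_forall fun _ => abs_nonneg _) hi.norm
    (.of_forall (abs_deriv_re_charFunInv_le hg htg))

lemma integral_exp_smul_charFunInv [CompleteSpace E] (hfc : Continuous f) (hf : Integrable f)
    (hfi : Integrable (charFunInv f)) (t : ℝ) :
    ∫ x : ℝ, Complex.exp (x * t * Complex.I) • charFunInv f x = f t := by
  have rescale (v : ℝ) : 𝓕 f v = (2 * π) • charFunInv f (2 * π * v) := by
    rw [charFunInv_eq_smul_fourier, smul_inv_smul₀ two_pi_pos.ne',
      mul_div_cancel_left₀ _ two_pi_pos.ne']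
  have fourier_integrable : Integrable (𝓕 f) := by
    rw [funext rescale]
    exact (hfi.comp_mul_left' two_pi_pos.ne').smul (2 * π)
  rw [← congrFun (hfc.fourierInv_fourier_eq hf fourier_integrable) t, fourierInv_eq']
  have subst := Measure.integral_comp_mul_left
    (fun x : ℝ => Complex.exp (x * t * Complex.I) • charFunInv f x) (2 * π)
  rw [abs_of_pos (by positivity), eq_inv_smul_iff₀ two_pi_pos.ne', ← integral_smul] at subst
  rw [← subst]
  congr 1
  ext v
  have phase_eq : 2 * π * ⟪v, t⟫_ℝ = 2 * π * v * t := by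
    rw [RCLike.inner_apply, conj_trivial]
    ring
  rw [rescale, smul_comm, phase_eq, ← Complex.ofReal_mul]

end CharFunInv

lemma eq_withDensity_re_charFunInv_charFun {μ : Measure ℝ} [IsFiniteMeasure μ]
    (hi : Integrable (charFun μ)) (hi_inv : Integrable (charFunInv (charFun μ))) :
    μ = volume.withDensity (fun x => ENNReal.ofReal (charFunInv (charFun μ) x).re) := by
  refine eq_withDensity_ofReal_re_of_charFun_eq hi_inv fun t => ?_
  rw [← integral_exp_smul_charFunInv continuous_charFun hi hi_inv t]
  simp [mul_comm]

lemma charFun_map_apply_real {Ω : Type*} [MeasurableSpace Ω] {P : Measure Ω} {X : Ω → ℝ}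
    (hX : AEMeasurable X P) (t : ℝ) :
    charFun (P.map X) t = ∫ ω, Complex.exp (Complex.I * t * X ω) ∂P := by
  rw [charFun_apply_real, integral_map hX (by fun_prop)]
  simp only [mul_comm, mul_left_comm]

/-- If `X` has finite second moment and its characteristic function `f` (twice continuously
differentiable, with derivatives `f'`, `f''`) satisfies
`∫ |t| (|f(t)| + |f'(t)| + |f''(t)|) dt < ∞`, then `X` has a continuously differentiable
density `p` with `∫ |p'(x)| dx ≤ ½ ∫ (|t f''(t)| + 2|f'(t)| + |t f(t)|) dt`. -/
theorem density_tv_bound_of_charFun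
    {Ω : Type*} [MeasureSpace Ω] [IsProbabilityMeasure (ℙ : Measure Ω)]
    (X : Ω → ℝ) (hXm : Measurable X)
    (hX2 : Integrable (fun ω => (X ω) ^ 2))
    (f f' f'' : ℝ → ℂ)
    (hf : ∀ t : ℝ, f t = ∫ ω, Complex.exp (Complex.I * t * X ω))
    (hf' : ∀ t : ℝ, HasDerivAt f (f' t) t)
    (hf'' : ∀ t : ℝ, HasDerivAt f' (f'' t) t)
    (hcont : Continuous f'')
    (hint : Integrable (fun t => |t| * (‖f t‖ + ‖f' t‖ + ‖f'' t‖))) :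
    ∃ p : ℝ → ℝ, ContDiff ℝ 1 p ∧
      Measure.map X ℙ = volume.withDensity (fun x => ENNReal.ofReal (p x)) ∧
      ∫ x, |deriv p x| ≤ (1 / 2) * ∫ t, (|t| * ‖f'' t‖ + 2 * ‖f' t‖ + |t| * ‖f t‖) := by
  have f_eq : f = charFun (Measure.map X ℙ) :=
    funext fun t => (hf t).trans (charFun_map_apply_real hXm.aemeasurable t).symm
  have hfc : Continuous f := continuous_iff_continuousAt.2 fun t => (hf' t).continuousAt
  have hfc' : Continuous f' := continuous_iff_continuousAt.2 fun t => (hf'' t).continuousAt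
  have integrable_id_smul {g : ℝ → ℂ} (hg : Continuous g)
      (hle : ∀ t, ‖g t‖ ≤ ‖f t‖ + ‖f' t‖ + ‖f'' t‖) : Integrable fun t => t • g t :=
    integrable_id_smul_of_norm_le hg.aestronglyMeasurable hint hle
  have htf := integrable_id_smul hfc fun t => by linarith [norm_nonneg (f' t), norm_nonneg (f'' t)]
  have htf' := integrable_id_smul hfc' fun t => by linarith [norm_nonneg (f t), norm_nonneg (f'' t)]
  have htf'' := integrable_id_smul hcont fun t => by
    linarith [norm_nonneg (f t), norm_nonneg (f' t)]
  have hfi := integrable_of_integrable_id_smul hfc.locallyIntegrable htf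
  have hfi' := integrable_of_integrable_id_smul hfc'.locallyIntegrable htf'
  have hfi'' := integrable_of_integrable_id_smul hcont.locallyIntegrable htf''
  refine ⟨fun x => (charFunInv f x).re, ?_, ?_, ?_⟩
  · exact Complex.reCLM.contDiff.comp (contDiff_one_charFunInv hfi htf)
  · have := Measure.isProbabilityMeasure_map (μ := ℙ) hXm.aemeasurable
    have hfi_inv := integrable_charFunInv hfi hfi' hfi'' hf' hf''
    rw [f_eq] at hfi hfi_inv ⊢
    exact eq_withDensity_re_charFunInv_charFun hfi hfi_inv
  · exact (integral_abs_deriv_re_charFunInv_le hfi htf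
      (integrable_charFunInv_id_smul hfi hfi' htf htf' htf'' hf' hf'')).trans
      (integral_norm_charFunInv_id_smul_le hfi hfi' htf htf' htf'' hf' hf'')
end
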